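/- arXiv:2502.17723 — 3 statements merged into one kernel-verified Lean document; each statement's English description precedes it below -/
import Mathlib

section
/- For every probability density f0 on [0,1] that is continuous and strictly positive on [0,1], and every ε > 0, there exist a natural number H ≥ 1, weights w_1, …, w_H > 0 with w_1 + ⋯ + w_H = 1, and parameters a_1, …, a_H > 0 and b_1, …, b_H > 0, such that the Kullback–Leibler divergence ∫₀¹ f0(x) · log( f0(x) / Σ_{k=1}^{H} w_k · f_Beta(x; a_k, b_k) ) dx is strictly less than ε. In other words, finite mixtures of Beta densities are dense in Kullback–Leibler divergence in the class of continuous strictly positive densities on [0,1]. -/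
open MeasureTheory Real

/-- The Beta density on `(0,1)` with parameters `a, b`. -/
noncomputable def fBeta (a b x : ℝ) : ℝ :=
  (Real.Gamma (a + b) / (Real.Gamma a * Real.Gamma b)) * x ^ (a - 1) * (1 - x) ^ (b - 1)

/-!
The Bernstein polynomial `(n choose k) xᵏ (1 - x)ⁿ⁻ᵏ` is `1 / (n + 1)` times a Beta density, so the
Bernstein approximations of a positive function are positive combinations of Beta densities.
Approximating `f0 + ε / 2` to within `ε / 2` gives such a combination `h` with `f0 < h < f0 + ε`.
Its total mass `S` is at most `1 + ε`, so the mixture `g = h / S` satisfies `f0 < (1 + ε) g`, and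
the divergence of `f0` from `g` is at most `log (1 + ε) < ε`.
-/

open Set ProbabilityTheory
open scoped unitInterval

section KullbackLeibler

theorem mul_log_div_le_mul_log {p q c : ℝ} (hp : 0 ≤ p) (hc : 0 ≤ c) (hpq : p ≤ c * q) :
    p * log (p / q) ≤ p * log c := by
  rcases hp.eq_or_lt with rfl | hp'
  · simp
  · have hq : 0 < q := pos_of_mul_pos_right (hp'.trans_le hpq) hc
    exact mul_le_mul_of_nonneg_left
      (log_le_log (div_pos hp' hq) ((div_le_iff₀ hq).2 hpq)) hp

theorem integral_mul_log_div_le {α : Type*} [MeasurableSpace α] {μ : Measure α} {f g : α → ℝ}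
    {c : ℝ} (hc : 0 ≤ c) (hf : Integrable f μ)
    (hfg : Integrable (fun x ↦ f x * log (f x / g x)) μ)
    (hf_nonneg : ∀ᵐ x ∂μ, 0 ≤ f x) (hle : ∀ᵐ x ∂μ, f x ≤ c * g x) :
    ∫ x, f x * log (f x / g x) ∂μ ≤ (∫ x, f x ∂μ) * log c := by
  rw [← integral_mul_const]
  refine integral_mono_ae hfg (hf.mul_const _) ?_
  filter_upwards [hf_nonneg, hle] with x hx hxle
  exact mul_log_div_le_mul_log hx hc hxle

theorem continuousOn_mul_log_div {X : Type*} [TopologicalSpace X] {f g : X → ℝ} {s : Set X}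
    (hf : ContinuousOn f s) (hg : ContinuousOn g s) (hg0 : ∀ x ∈ s, g x ≠ 0) :
    ContinuousOn (fun x ↦ f x * log (f x / g x)) s := by
  -- `y ↦ y * log y` is continuous even at `0`, so zeros of `f` do no harm.
  have h : ContinuousOn (fun x ↦ g x * (f x / g x * log (f x / g x))) s :=
    hg.mul (continuous_mul_log.comp_continuousOn (hf.div hg hg0))
  refine h.congr fun x hx ↦ ?_
  simp only [← mul_assoc, mul_div_cancel₀ _ (hg0 x hx)]

end KullbackLeibler

section BetaDensity

variable {a b : ℝ}

theorem integral_betaPDFReal_eq_one (ha : 0 < a) (hb : 0 < b) : ∫ x, betaPDFReal a b x = 1 := by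
  have h_nonneg (x : ℝ) : 0 ≤ betaPDFReal a b x := by
    by_cases hx : 0 < x ∧ x < 1
    · exact (betaPDFReal_pos hx.1 hx.2 ha hb).le
    · rw [betaPDFReal, if_neg hx]
  rw [integral_eq_lintegral_of_nonneg_ae (.of_forall h_nonneg)
    (stronglyMeasurable_betaPDFReal a b).aestronglyMeasurable]
  exact (ENNReal.toReal_eq_one_iff _).2 (lintegral_betaPDF_eq_one ha hb)

theorem betaPDFReal_eq_indicator_fBeta (a b : ℝ) :
    betaPDFReal a b = (Ioo 0 1).indicator (fBeta a b) := by
  ext x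
  simp only [betaPDFReal, beta, one_div_div, indicator_apply, mem_Ioo, fBeta]

theorem integral_fBeta (ha : 0 < a) (hb : 0 < b) : ∫ x in (0 : ℝ)..1, fBeta a b x = 1 := by
  rw [intervalIntegral.integral_of_le zero_le_one, integral_Ioc_eq_integral_Ioo,
    ← integral_indicator measurableSet_Ioo, ← betaPDFReal_eq_indicator_fBeta,
    integral_betaPDFReal_eq_one ha hb]

theorem intervalIntegrable_fBeta (ha : 0 < a) (hb : 0 < b) :
    IntervalIntegrable (fBeta a b) volume 0 1 :=
  intervalIntegral.intervalIntegrable_of_integral_ne_zero (by simp [integral_fBeta ha hb])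

theorem continuous_fBeta (ha : 1 ≤ a) (hb : 1 ≤ b) : Continuous (fBeta a b) :=
  (continuous_const.mul (continuous_id.rpow_const fun _ ↦ .inr (sub_nonneg.2 ha))).mul
    ((continuous_const.sub continuous_id).rpow_const fun _ ↦ .inr (sub_nonneg.2 hb))

theorem fBeta_natCast_add_one (j k : ℕ) (x : ℝ) :
    fBeta (j + 1) (k + 1) x = (j + k + 1) * ((j + k).choose j * x ^ j * (1 - x) ^ k) := by
  have hsum : (j : ℝ) + 1 + (k + 1) = (j + k + 1 : ℕ) + 1 := by push_cast; ring
  rw [fBeta, hsum, Gamma_nat_eq_factorial, Gamma_nat_eq_factorial, Gamma_nat_eq_factorial,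
    add_sub_cancel_right, add_sub_cancel_right, rpow_natCast, rpow_natCast,
    Nat.cast_add_choose, Nat.factorial_succ]
  push_cast
  ring

theorem fBeta_eq_mul_bernstein {n k : ℕ} (hk : k ≤ n) (x : I) :
    fBeta (k + 1) ((n - k : ℕ) + 1) x = (n + 1) * bernstein n k x := by
  rw [fBeta_natCast_add_one, bernstein_apply, Nat.add_sub_cancel' hk, Nat.cast_sub hk]
  ring

end BetaDensity

section BetaMixture

variable {ι : Type*} [Fintype ι]

/-- The combination of the Beta densities with parameters `a k, b k` and coefficients `w k`. The
coefficients are arbitrary reals, so that unnormalized combinations are covered as well. -/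
noncomputable def betaMixture (w a b : ι → ℝ) (x : ℝ) : ℝ :=
  ∑ k, w k * fBeta (a k) (b k) x

variable (w : ι → ℝ) {a b : ι → ℝ}

theorem betaMixture_div (a b : ι → ℝ) (c x : ℝ) :
    betaMixture (fun k ↦ w k / c) a b x = betaMixture w a b x / c := by
  simp only [betaMixture, Finset.sum_div, div_mul_eq_mul_div]

theorem continuous_betaMixture (ha : ∀ k, 1 ≤ a k) (hb : ∀ k, 1 ≤ b k) :
    Continuous (betaMixture w a b) :=
  continuous_finsetSum _ fun k _ ↦ (continuous_fBeta (ha k) (hb k)).const_mul (w k)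

theorem integral_betaMixture (ha : ∀ k, 0 < a k) (hb : ∀ k, 0 < b k) :
    ∫ x in (0 : ℝ)..1, betaMixture w a b x = ∑ k, w k := by
  simp only [betaMixture]
  rw [intervalIntegral.integral_finsetSum
    fun k _ ↦ (intervalIntegrable_fBeta (ha k) (hb k)).const_mul (w k)]
  simp only [intervalIntegral.integral_const_mul, integral_fBeta (ha _) (hb _), mul_one]

theorem bernsteinApproximation_eq_betaMixture (n : ℕ) (F : C(I, ℝ)) (x : I) :
    bernsteinApproximation n F x =
      betaMixture (fun k : Fin (n + 1) ↦ F (bernstein.z k) / (n + 1))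
        (fun k ↦ k + 1) (fun k ↦ (n - k : ℕ) + 1) x := by
  rw [bernsteinApproximation.apply]
  refine Finset.sum_congr rfl fun k _ ↦ ?_
  rw [fBeta_eq_mul_bernstein k.is_le, smul_eq_mul]
  field_simp

end BetaMixture

section Approximation

variable {f : ℝ → ℝ} {δ : ℝ}

theorem exists_abs_betaMixture_sub_lt {F : C(I, ℝ)} (hF : ∀ x, 0 < F x) (hδ : 0 < δ) :
    ∃ (n : ℕ) (w a b : Fin (n + 1) → ℝ), (∀ k, 0 < w k) ∧ (∀ k, 1 ≤ a k) ∧ (∀ k, 1 ≤ b k) ∧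
      ∀ x : I, |betaMixture w a b x - F x| < δ := by
  obtain ⟨n, hn⟩ := (Metric.tendsto_nhds.1 (bernsteinApproximation_uniform F) δ hδ).exists
  refine ⟨n, fun k ↦ F (bernstein.z k) / (n + 1), fun k ↦ k + 1, fun k ↦ (n - k : ℕ) + 1,
    fun k ↦ div_pos (hF _) n.cast_add_one_pos, fun k ↦ by simp, fun k ↦ by simp, fun x ↦ ?_⟩
  rw [← bernsteinApproximation_eq_betaMixture, ← Real.dist_eq]
  exact (ContinuousMap.dist_lt_iff hδ).1 hn x

theorem exists_betaMixture_mem_Ioo (hf : ContinuousOn f (Icc 0 1))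
    (hf_nonneg : ∀ x ∈ Icc (0 : ℝ) 1, 0 ≤ f x) (hδ : 0 < δ) :
    ∃ (n : ℕ) (w a b : Fin (n + 1) → ℝ), (∀ k, 0 < w k) ∧ (∀ k, 1 ≤ a k) ∧ (∀ k, 1 ≤ b k) ∧
      ∀ x ∈ Icc (0 : ℝ) 1, betaMixture w a b x ∈ Ioo (f x) (f x + δ) := by
  let F : C(I, ℝ) := ⟨fun x ↦ f x + δ / 2, hf.domRestrict.add continuous_const⟩
  have hF (x : I) : 0 < F x := add_pos_of_nonneg_of_pos (hf_nonneg x x.2) (half_pos hδ)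
  obtain ⟨n, w, a, b, hw, ha, hb, happrox⟩ := exists_abs_betaMixture_sub_lt hF (half_pos hδ)
  refine ⟨n, w, a, b, hw, ha, hb, fun x hx ↦ ?_⟩
  have hx_approx : |betaMixture w a b x - (f x + δ / 2)| < δ / 2 := happrox ⟨x, hx⟩
  rw [abs_lt] at hx_approx
  constructor <;> linarith

theorem exists_lt_mul_betaMixture (hf : ContinuousOn f (Icc 0 1))
    (hf_nonneg : ∀ x ∈ Icc (0 : ℝ) 1, 0 ≤ f x) (hδ : 0 < δ) :
    ∃ (n : ℕ) (w a b : Fin (n + 1) → ℝ),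
      (∀ k, 0 < w k) ∧ ∑ k, w k = 1 ∧ (∀ k, 1 ≤ a k) ∧ (∀ k, 1 ≤ b k) ∧
      ∀ x ∈ Icc (0 : ℝ) 1, f x < ((∫ y in (0 : ℝ)..1, f y) + δ) * betaMixture w a b x := by
  obtain ⟨n, v, a, b, hv, ha, hb, hvf⟩ := exists_betaMixture_mem_Ioo hf hf_nonneg hδ
  set S := ∑ k, v k
  have hS : 0 < S := Finset.sum_pos (fun k _ ↦ hv k) Finset.univ_nonempty
  have hS_le : S ≤ (∫ y in (0 : ℝ)..1, f y) + δ := by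
    have hf_int : IntervalIntegrable f volume 0 1 := hf.intervalIntegrable_of_Icc zero_le_one
    calc S = ∫ x in (0 : ℝ)..1, betaMixture v a b x :=
          (integral_betaMixture v (fun k ↦ zero_lt_one.trans_le (ha k))
            fun k ↦ zero_lt_one.trans_le (hb k)).symm
      _ ≤ ∫ x in (0 : ℝ)..1, (f x + δ) :=
          intervalIntegral.integral_mono_on zero_le_one
            ((continuous_betaMixture v ha hb).intervalIntegrable _ _)
            (hf_int.add intervalIntegrable_const) fun x hx ↦ (hvf x hx).2.le
      _ = (∫ y in (0 : ℝ)..1, f y) + δ := by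
          rw [intervalIntegral.integral_add hf_int intervalIntegrable_const]
          simp
  refine ⟨n, fun k ↦ v k / S, a, b, fun k ↦ div_pos (hv k) hS, ?_, ha, hb, fun x hx ↦ ?_⟩
  · rw [← Finset.sum_div, div_self hS.ne']
  · have hmix : 0 ≤ betaMixture v a b x / S :=
      div_nonneg ((hf_nonneg x hx).trans (hvf x hx).1.le) hS.le
    calc f x < betaMixture v a b x := (hvf x hx).1
      _ = S * (betaMixture v a b x / S) := (mul_div_cancel₀ _ hS.ne').symm
      _ ≤ ((∫ y in (0 : ℝ)..1, f y) + δ) * (betaMixture v a b x / S) := by gcongr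
      _ = _ := by rw [betaMixture_div]

end Approximation

theorem beta_mixtures_KL_dense_general
    (f0 : ℝ → ℝ)
    (hcont : ContinuousOn f0 (Icc 0 1))
    (hnonneg : ∀ x ∈ Icc (0 : ℝ) 1, 0 ≤ f0 x)
    (hint : ∫ x in (0 : ℝ)..1, f0 x = 1)
    (ε : ℝ) (hε : 0 < ε) :
    ∃ (H : ℕ), 1 ≤ H ∧ ∃ (w a b : Fin H → ℝ),
      (∀ k, 0 < w k) ∧ (∑ k, w k = 1) ∧
      (∀ k, 0 < a k) ∧ (∀ k, 0 < b k) ∧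
      (∫ x in (0 : ℝ)..1,
          f0 x * log (f0 x / ∑ k, w k * fBeta (a k) (b k) x)) < ε := by
  obtain ⟨n, w, a, b, hw, hw_sum, ha, hb, hlt⟩ := exists_lt_mul_betaMixture hcont hnonneg hε
  rw [hint] at hlt
  refine ⟨n + 1, n.succ_pos, w, a, b, hw, hw_sum, fun k ↦ zero_lt_one.trans_le (ha k),
    fun k ↦ zero_lt_one.trans_le (hb k), ?_⟩
  have hε1 : 0 < 1 + ε := by positivity
  have hmix (x) (hx : x ∈ Icc (0 : ℝ) 1) : betaMixture w a b x ≠ 0 :=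
    (pos_of_mul_pos_right ((hnonneg x hx).trans_lt (hlt x hx)) hε1.le).ne'
  have hlog_cont : ContinuousOn (fun x ↦ f0 x * log (f0 x / betaMixture w a b x)) (Icc 0 1) :=
    continuousOn_mul_log_div hcont (continuous_betaMixture w ha hb).continuousOn hmix
  calc ∫ x in (0 : ℝ)..1, f0 x * log (f0 x / betaMixture w a b x)
      ≤ (∫ x in (0 : ℝ)..1, f0 x) * log (1 + ε) := by
        simp only [intervalIntegral.integral_of_le zero_le_one, ← integral_Icc_eq_integral_Ioc]
        exact integral_mul_log_div_le hε1.le hcont.integrableOn_Icc hlog_cont.integrableOn_Icc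
          (ae_restrict_of_forall_mem measurableSet_Icc hnonneg)
          (ae_restrict_of_forall_mem measurableSet_Icc fun x hx ↦ (hlt x hx).le)
    _ = log (1 + ε) := by rw [hint, one_mul]
    _ < ε := by linarith [log_lt_sub_one_of_pos hε1 (by linarith)]

/-- Finite mixtures of Beta densities are dense in Kullback–Leibler divergence among
continuous, strictly positive probability densities on `[0,1]`. -/
theorem beta_mixtures_KL_dense
    (f0 : ℝ → ℝ)
    (hcont : ContinuousOn f0 (Set.Icc 0 1))
    (hpos : ∀ x ∈ Set.Icc (0 : ℝ) 1, 0 < f0 x)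
    (hint : ∫ x in (0:ℝ)..1, f0 x = 1)
    (ε : ℝ) (hε : 0 < ε) :
    ∃ (H : ℕ), 1 ≤ H ∧ ∃ (w a b : Fin H → ℝ),
      (∀ k, 0 < w k) ∧ (∑ k, w k = 1) ∧
      (∀ k, 0 < a k) ∧ (∀ k, 0 < b k) ∧
      (∫ x in (0:ℝ)..1,
          f0 x * Real.log (f0 x / ∑ k, w k * fBeta (a k) (b k) x)) < ε :=
  beta_mixtures_KL_dense_general f0 hcont (fun x hx ↦ (hpos x hx).le) hint ε hε
end

section
/- Fix x ∈ (0,1). The function l(a, b) = log Γ(a+b) − log Γ(a) − log Γ(b) + (a−1)·log x + (b−1)·log(1−x), i.e. the log of the Beta density x ↦ f_Beta(x; a, b) viewed as a function of its parameters, is strictly concave on the convex set (0,∞) × (0,∞). -/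
open Real

/-!
Up to an affine function of `(a, b)`, the log-density is `-log B(a, b)`, where
`B(a, b) = ∫₀¹ exp ((a - 1) log y + (b - 1) log (1 - y)) dy`. The logarithm of the integral of
`exp (f θ y)` is convex in `θ` as soon as `f` is, by the weighted AM-GM inequality applied to the
normalized integrands, and equality would force `f θ - f η` to be almost everywhere constant in
`y`. Here this cannot happen for `θ ≠ η`, since `1`, `log y` and `log (1 - y)` are linearly
independent.
-/

open MeasureTheory ProbabilityTheory Set Filter

section LogIntegralExp

variable {α : Type*} [MeasurableSpace α] {μ : Measure α} {u v : α → ℝ} {s t : ℝ}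

lemma aemeasurable_of_integrable_exp (hu : Integrable (fun y => exp (u y)) μ) :
    AEMeasurable u μ := by
  simpa only [log_exp] using hu.aestronglyMeasurable.aemeasurable.log

lemma exp_combo_le (hs : 0 ≤ s) (ht : 0 ≤ t) (hst : s + t = 1) (a b : ℝ) :
    exp (s * a + t * b) ≤ s * exp a + t * exp b :=
  convexOn_exp.2 (mem_univ a) (mem_univ b) hs ht hst

lemma integrable_exp_combo (hu : Integrable (fun y => exp (u y)) μ)
    (hv : Integrable (fun y => exp (v y)) μ) (hs : 0 ≤ s) (ht : 0 ≤ t) (hst : s + t = 1) :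
    Integrable (fun y => exp (s * u y + t * v y)) μ := by
  have hmeas : AEMeasurable (fun y => exp (s * u y + t * v y)) μ :=
    (((aemeasurable_of_integrable_exp hu).const_mul s).add
      ((aemeasurable_of_integrable_exp hv).const_mul t)).exp
  refine ((hu.const_mul s).add (hv.const_mul t)).mono' hmeas.aestronglyMeasurable ?_
  filter_upwards with y
  rw [norm_of_nonneg (exp_pos _).le]
  exact exp_combo_le hs ht hst (u y) (v y)

lemma integral_exp_combo_lt (hu : Integrable (fun y => exp (u y)) μ)
    (hv : Integrable (fun y => exp (v y)) μ) (huv : ¬ u =ᵐ[μ] v)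
    (hs : 0 < s) (ht : 0 < t) (hst : s + t = 1) :
    ∫ y, exp (s * u y + t * v y) ∂μ < s * ∫ y, exp (u y) ∂μ + t * ∫ y, exp (v y) ∂μ := by
  have hcombo := integrable_exp_combo hu hv hs.le ht.le hst
  have hsum : Integrable (fun y => s * exp (u y) + t * exp (v y)) μ :=
    (hu.const_mul s).add (hv.const_mul t)
  have hle : (fun y => exp (s * u y + t * v y)) ≤ fun y => s * exp (u y) + t * exp (v y) :=
    fun y => exp_combo_le hs.le ht.le hst (u y) (v y)
  rw [← integral_const_mul, ← integral_const_mul,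
    ← integral_add (hu.const_mul s) (hv.const_mul t)]
  refine (integral_mono hcombo hsum hle).lt_of_ne fun heq => huv ?_
  filter_upwards [(integral_eq_iff_of_ae_le hcombo hsum (.of_forall hle)).1 heq] with y hy
  by_contra hne
  exact (strictConvexOn_exp.2 (mem_univ (u y)) (mem_univ (v y)) hne hs ht hst).ne hy

lemma log_integral_exp_combo_lt (hu : Integrable (fun y => exp (u y)) μ)
    (hv : Integrable (fun y => exp (v y)) μ) (huv : ∀ c, ¬ ∀ᵐ y ∂μ, u y - v y = c)
    (hs : 0 < s) (ht : 0 < t) (hst : s + t = 1) :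
    log (∫ y, exp (s * u y + t * v y) ∂μ) <
      s * log (∫ y, exp (u y) ∂μ) + t * log (∫ y, exp (v y) ∂μ) := by
  have : NeZero μ := ⟨fun hμ => huv 0 (by simp [hμ])⟩
  set U := log (∫ y, exp (u y) ∂μ)
  set V := log (∫ y, exp (v y) ∂μ)
  have expU : exp U = ∫ y, exp (u y) ∂μ := exp_log (integral_exp_pos hu)
  have expV : exp V = ∫ y, exp (v y) ∂μ := exp_log (integral_exp_pos hv)
  have hne : ¬ (fun y => u y - U) =ᵐ[μ] fun y => v y - V := fun h =>
    huv (U - V) (h.mono fun y hy => by linarith)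
  have normalized : ∫ y, exp (s * (u y - U) + t * (v y - V)) ∂μ < 1 := by
    have h := integral_exp_combo_lt (by simpa only [exp_sub] using hu.div_const (exp U))
      (by simpa only [exp_sub] using hv.div_const (exp V)) hne hs ht hst
    simp only [exp_sub, integral_div, ← expU, ← expV, div_self (exp_ne_zero _), mul_one, hst] at h
    exact h
  have factored (y : α) : exp (s * (u y - U) + t * (v y - V)) =
      exp (s * u y + t * v y) / exp (s * U + t * V) := by
    rw [← exp_sub]
    ring_nf
  simp only [factored, integral_div] at normalized
  rwa [log_lt_iff_lt_exp (integral_exp_pos (integrable_exp_combo hu hv hs.le ht.le hst)),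
    ← div_lt_one (exp_pos _)]

theorem strictConvexOn_log_integral_exp {E : Type*} [AddCommMonoid E] [Module ℝ E] {S : Set E}
    {f : E → α → ℝ} (hS : Convex ℝ S) (hf : ∀ᵐ y ∂μ, ConvexOn ℝ S fun θ => f θ y)
    (hint : ∀ θ ∈ S, Integrable (fun y => exp (f θ y)) μ)
    (hne : S.Pairwise fun θ η => ∀ c, ¬ ∀ᵐ y ∂μ, f θ y - f η y = c) :
    StrictConvexOn ℝ S fun θ => log (∫ y, exp (f θ y) ∂μ) := by
  refine ⟨hS, fun θ hθ η hη hθη s t hs ht hst => ?_⟩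
  have hmem : s • θ + t • η ∈ S := hS hθ hη hs.le ht.le hst
  have : NeZero μ := ⟨fun hμ => hne hθ hη hθη 0 (by simp [hμ])⟩
  calc log (∫ y, exp (f (s • θ + t • η) y) ∂μ)
      ≤ log (∫ y, exp (s * f θ y + t * f η y) ∂μ) := by
        refine log_le_log (integral_exp_pos (hint _ hmem)) (integral_mono_ae (hint _ hmem)
          (integrable_exp_combo (hint θ hθ) (hint η hη) hs.le ht.le hst) ?_)
        filter_upwards [hf] with y hy
        exact exp_le_exp.2 (hy.2 hθ hη hs.le ht.le hst)
    _ < s * log (∫ y, exp (f θ y) ∂μ) + t * log (∫ y, exp (f η y) ∂μ) :=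
        log_integral_exp_combo_lt (hint θ hθ) (hint η hη) (hne hθ hη hθη) hs ht hst

end LogIntegralExp

section BetaFunction

/-- The logarithm of the unnormalized Beta density `y ^ (a - 1) * (1 - y) ^ (b - 1)` with
parameters `p = (a, b)`. Written with `log` instead of as `log` of the product, it is affine in `p`
for every real `y`. -/
noncomputable def logBetaKernel (p : ℝ × ℝ) (y : ℝ) : ℝ :=
  (p.1 - 1) * log y + (p.2 - 1) * log (1 - y)

lemma logBetaKernel_combo {s t : ℝ} (hst : s + t = 1) (p q : ℝ × ℝ) (y : ℝ) :
    logBetaKernel (s • p + t • q) y = s * logBetaKernel p y + t * logBetaKernel q y := by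
  simp only [logBetaKernel, Prod.fst_add, Prod.snd_add, Prod.smul_fst, Prod.smul_snd, smul_eq_mul]
  linear_combination (log y + log (1 - y)) * hst

lemma convexOn_logBetaKernel {S : Set (ℝ × ℝ)} (hS : Convex ℝ S) (y : ℝ) :
    ConvexOn ℝ S fun p => logBetaKernel p y :=
  ⟨hS, fun p _ q _ _ _ _ _ hst => (logBetaKernel_combo hst p q y).le⟩

lemma concaveOn_logBetaKernel {S : Set (ℝ × ℝ)} (hS : Convex ℝ S) (y : ℝ) :
    ConcaveOn ℝ S fun p => logBetaKernel p y :=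
  ⟨hS, fun p _ q _ _ _ _ _ hst => (logBetaKernel_combo hst p q y).ge⟩

lemma exp_logBetaKernel (p : ℝ × ℝ) {y : ℝ} (hy : y ∈ Ioo (0 : ℝ) 1) :
    exp (logBetaKernel p y) = y ^ (p.1 - 1) * (1 - y) ^ (p.2 - 1) := by
  rw [logBetaKernel, exp_add, rpow_def_of_pos hy.1, rpow_def_of_pos (sub_pos.2 hy.2),
    mul_comm (log y), mul_comm (log (1 - y))]

lemma exp_logBetaKernel_eq_re (p : ℝ × ℝ) {y : ℝ} (hy : y ∈ Ioo (0 : ℝ) 1) :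
    exp (logBetaKernel p y) = ((y : ℂ) ^ ((p.1 : ℂ) - 1) * (1 - (y : ℂ)) ^ ((p.2 : ℂ) - 1)).re := by
  rw [exp_logBetaKernel p hy, ← Complex.ofReal_re (_ * _)]
  push_cast [Complex.ofReal_cpow hy.1.le, Complex.ofReal_cpow (sub_pos.2 hy.2).le]
  rfl

lemma integrableOn_betaIntegrand {u v : ℂ} (hu : 0 < u.re) (hv : 0 < v.re) :
    IntegrableOn (fun y : ℝ => (y : ℂ) ^ (u - 1) * (1 - (y : ℂ)) ^ (v - 1)) (Ioo 0 1) :=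
  (intervalIntegrable_iff_integrableOn_Ioo_of_le zero_le_one).1
    (Complex.betaIntegral_convergent hu hv)

lemma integrableOn_exp_logBetaKernel {p : ℝ × ℝ} (hp₁ : 0 < p.1) (hp₂ : 0 < p.2) :
    IntegrableOn (fun y => exp (logBetaKernel p y)) (Ioo 0 1) :=
  IntegrableOn.congr_fun (integrableOn_betaIntegrand (u := p.1) (v := p.2) hp₁ hp₂).re
    (fun _ hy => (exp_logBetaKernel_eq_re p hy).symm) measurableSet_Ioo

lemma integral_exp_logBetaKernel {p : ℝ × ℝ} (hp₁ : 0 < p.1) (hp₂ : 0 < p.2) :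
    ∫ y in Ioo 0 1, exp (logBetaKernel p y) = beta p.1 p.2 := by
  rw [beta_eq_betaIntegralReal p.1 p.2 hp₁ hp₂, Complex.betaIntegral,
    intervalIntegral.integral_of_le zero_le_one, integral_Ioc_eq_integral_Ioo,
    setIntegral_congr_fun measurableSet_Ioo fun y hy => exp_logBetaKernel_eq_re p hy]
  exact integral_re (integrableOn_betaIntegrand (u := p.1) (v := p.2) hp₁ hp₂)

lemma hasDerivAt_logBetaKernel (p : ℝ × ℝ) {y : ℝ} (hy : y ∈ Ioo (0 : ℝ) 1) :
    HasDerivAt (logBetaKernel p) ((p.1 - 1) / y - (p.2 - 1) / (1 - y)) y := by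
  have hlog : HasDerivAt (fun y => log (1 - y)) (-1 / (1 - y)) y :=
    ((hasDerivAt_id y).const_sub 1).log (sub_pos.2 hy.2).ne'
  exact (((hasDerivAt_log hy.1.ne').const_mul (p.1 - 1)).add
    (hlog.const_mul (p.2 - 1))).congr_deriv (by ring)

lemma eq_of_logBetaKernel_sub_eqOn_const {p q : ℝ × ℝ} {c : ℝ}
    (h : EqOn (fun y => logBetaKernel p y - logBetaKernel q y) (fun _ => c) (Ioo 0 1)) :
    p = q := by
  have deriv_zero : ∀ y ∈ Ioo (0 : ℝ) 1,
      (p.1 - 1) / y - (p.2 - 1) / (1 - y) - ((q.1 - 1) / y - (q.2 - 1) / (1 - y)) = 0 :=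
    fun y hy => ((hasDerivAt_logBetaKernel p hy).sub (hasDerivAt_logBetaKernel q hy)).unique
      ((hasDerivAt_const y c).congr_of_eventuallyEq
        (h.eventuallyEq_of_mem (Ioo_mem_nhds hy.1 hy.2)))
  have at_half := deriv_zero (1 / 2) (by norm_num)
  have at_third := deriv_zero (1 / 3) (by norm_num)
  norm_num at at_half at_third
  ext <;> linarith

lemma eq_of_logBetaKernel_sub_ae_const {p q : ℝ × ℝ} {c : ℝ}
    (h : ∀ᵐ y ∂volume.restrict (Ioo (0 : ℝ) 1), logBetaKernel p y - logBetaKernel q y = c) :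
    p = q := by
  have hcont (r : ℝ × ℝ) : ContinuousOn (logBetaKernel r) (Ioo 0 1) :=
    fun y hy => (hasDerivAt_logBetaKernel r hy).continuousAt.continuousWithinAt
  exact eq_of_logBetaKernel_sub_eqOn_const
    (Measure.eqOn_open_of_ae_eq h isOpen_Ioo ((hcont p).sub (hcont q)) continuousOn_const)

theorem strictConvexOn_log_beta :
    StrictConvexOn ℝ (Ioi (0 : ℝ) ×ˢ Ioi (0 : ℝ)) fun p : ℝ × ℝ => log (beta p.1 p.2) := by
  have hconv : Convex ℝ (Ioi (0 : ℝ) ×ˢ Ioi (0 : ℝ)) := (convex_Ioi 0).prod (convex_Ioi 0)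
  refine (strictConvexOn_log_integral_exp hconv (.of_forall (convexOn_logBetaKernel hconv))
    (fun p hp => integrableOn_exp_logBetaKernel hp.1 hp.2)
    (fun p _ q _ hpq c h => hpq (eq_of_logBetaKernel_sub_ae_const h))).congr fun p hp => ?_
  exact congrArg log (integral_exp_logBetaKernel hp.1 hp.2)

lemma log_beta {a b : ℝ} (ha : 0 < a) (hb : 0 < b) :
    log (beta a b) = log (Gamma a) + log (Gamma b) - log (Gamma (a + b)) := by
  have hΓa := (Gamma_pos_of_pos ha).ne'
  have hΓb := (Gamma_pos_of_pos hb).ne'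
  rw [beta, log_div (mul_ne_zero hΓa hΓb) (Gamma_pos_of_pos (add_pos ha hb)).ne', log_mul hΓa hΓb]

end BetaFunction

/-- For fixed `x ∈ (0,1)`, the log of the Beta density
`(a,b) ↦ log Γ(a+b) − log Γ(a) − log Γ(b) + (a−1) log x + (b−1) log (1−x)`
is strictly concave on `(0,∞) × (0,∞)`. -/
theorem logBetaDensity_strictConcaveOn (x : ℝ) (hx : x ∈ Set.Ioo (0 : ℝ) 1) :
    StrictConcaveOn ℝ (Set.Ioi (0 : ℝ) ×ˢ Set.Ioi (0 : ℝ))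
      (fun p : ℝ × ℝ =>
        Real.log (Real.Gamma (p.1 + p.2)) - Real.log (Real.Gamma p.1)
          - Real.log (Real.Gamma p.2)
          + (p.1 - 1) * Real.log x + (p.2 - 1) * Real.log (1 - x)) := by
  refine (strictConvexOn_log_beta.neg.add_concaveOn
    (concaveOn_logBetaKernel strictConvexOn_log_beta.1 x)).congr fun p hp => ?_
  simp only [Pi.add_apply, Pi.neg_apply, log_beta hp.1 hp.2, logBetaKernel]
  ring
end

section
/- Let ψ₁ denote the trigamma function, i.e. ψ₁(x) is the second derivative of x ↦ log Γ(x) at x, for x ∈ (0,∞). Then for all a > 0 and b > 0, ψ₁(a) · ψ₁(b) > ψ₁(a+b) · (ψ₁(a) + ψ₁(b)). (Equivalently, since ψ₁ > 0 on (0,∞), the reciprocal trigamma is strictly superadditive: 1/ψ₁(a+b) > 1/ψ₁(a) + 1/ψ₁(b). This is the determinant condition guaranteeing that the Hessian in (a,b) of the log Beta density is negative definite.) -/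
open Real

/-- The trigamma function: the second derivative of `log ∘ Γ` on `(0,∞)`. -/
noncomputable def trigamma (x : ℝ) : ℝ :=
  deriv (deriv (fun y : ℝ => Real.log (Real.Gamma y))) x

/-!
It suffices that `ψ₁ > 0` and that `x ψ₁(x)` is strictly decreasing on `(0, ∞)`: multiply
`(a + b) ψ₁(a + b) < a ψ₁(a)` by `ψ₁(b)`, exchange `a` and `b`, and add. The series
`x ψ₁(x) = ∑ x / (x + k)²` is not termwise monotone, but adding multiples of the telescoping series
`∑ (1 / (x + k) - 1 / (x + k + 1)) = 1 / x` turns it into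
`x ψ₁(x) = 1 + ∑ (k + 1) / ((x + k) (x + k + 1)²)`, each term of which is strictly decreasing.
The series for `ψ₁` is the termwise derivative of the series for `ψ(y) - ψ(x)`, which converges
because `ψ` satisfies `ψ(x + 1) = ψ(x) + 1 / x` and, by log-convexity of `Γ`, is monotone.
-/

open Filter Set
open scoped Topology

lemma apply_add_mul_add_lt_mul_of_strictAntiOn {R : Type*} [CommSemiring R] [LinearOrder R]
    [IsStrictOrderedRing R] {f : R → R} (hpos : ∀ x, 0 < x → 0 < f x)
    (hanti : StrictAntiOn (fun x => x * f x) (Ioi 0)) {a b : R} (ha : 0 < a) (hb : 0 < b) :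
    f (a + b) * (f a + f b) < f a * f b := by
  have hab : 0 < a + b := add_pos ha hb
  have hlt_a : (a + b) * f (a + b) < a * f a := hanti ha hab (lt_add_of_pos_right a hb)
  have hlt_b : (a + b) * f (a + b) < b * f b := hanti hb hab (lt_add_of_pos_left b ha)
  refine lt_of_mul_lt_mul_left ?_ hab.le
  calc (a + b) * (f (a + b) * (f a + f b))
      = (a + b) * f (a + b) * f b + (a + b) * f (a + b) * f a := by ring
    _ < a * f a * f b + b * f b * f a :=
        add_lt_add (mul_lt_mul_of_pos_right hlt_a (hpos b hb))
          (mul_lt_mul_of_pos_right hlt_b (hpos a ha))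
    _ = (a + b) * (f a * f b) := by ring

section ShiftEquation

variable {f g : ℝ → ℝ} {x y : ℝ}

lemma add_natCast_eq_add_sum_of_add_one (hfg : ∀ z, 0 < z → f (z + 1) = f z + g z) (hx : 0 < x)
    (n : ℕ) : f (x + n) = f x + ∑ k ∈ Finset.range n, g (x + k) := by
  induction n with
  | zero => simp
  | succ n ih =>
    rw [Finset.sum_range_succ, ← add_assoc, ← ih, Nat.cast_succ, ← add_assoc,
      hfg _ (by positivity)]

lemma tendsto_add_natCast_sub_of_add_one (hfg : ∀ z, 0 < z → f (z + 1) = f z + g z)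
    (hg : Tendsto g atTop (𝓝 0)) (hx : 0 < x) (m : ℕ) :
    Tendsto (fun n : ℕ => f (x + n + m) - f (x + n)) atTop (𝓝 0) := by
  have hterm (k : ℕ) : Tendsto (fun n : ℕ => g (x + n + k)) atTop (𝓝 0) :=
    hg.comp <| tendsto_atTop_add_const_right _ _ <|
      tendsto_atTop_add_const_left _ _ tendsto_natCast_atTop_atTop
  have hsum : Tendsto (fun n : ℕ => ∑ k ∈ Finset.range m, g (x + n + k)) atTop (𝓝 0) := by
    simpa only [Finset.sum_const_zero] using tendsto_finsetSum (Finset.range m) fun k _ => hterm k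
  refine hsum.congr fun n => ?_
  rw [add_natCast_eq_add_sum_of_add_one hfg (by positivity), add_sub_cancel_left]

lemma tendsto_sub_add_natCast_of_monotoneOn (hf : MonotoneOn f (Ioi 0))
    (hfg : ∀ z, 0 < z → f (z + 1) = f z + g z) (hg : Tendsto g atTop (𝓝 0)) (hx : 0 < x)
    (hxy : x ≤ y) : Tendsto (fun n : ℕ => f (y + n) - f (x + n)) atTop (𝓝 0) := by
  obtain ⟨m, hm⟩ := exists_nat_ge (y - x)
  have hxn (n : ℕ) : 0 < x + n := by positivity
  have hyn (n : ℕ) : 0 < y + n := (hxn n).trans_le (by gcongr)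
  refine squeeze_zero (fun n => ?_) (fun n => ?_) (tendsto_add_natCast_sub_of_add_one hfg hg hx m)
  · exact sub_nonneg.2 (hf (hxn n) (hyn n) (by gcongr))
  · exact sub_le_sub_right
      (hf (hyn n) (mem_Ioi.2 (add_pos_of_pos_of_nonneg (hxn n) m.cast_nonneg)) (by linarith)) _

lemma hasSum_sub_of_monotoneOn_of_antitoneOn (hf : MonotoneOn f (Ioi 0))
    (hfg : ∀ z, 0 < z → f (z + 1) = f z + g z) (hg_anti : AntitoneOn g (Ioi 0))
    (hg : Tendsto g atTop (𝓝 0)) (hx : 0 < x) (hxy : x ≤ y) :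
    HasSum (fun k : ℕ => g (x + k) - g (y + k)) (f y - f x) := by
  have hy : 0 < y := hx.trans_le hxy
  have hnonneg (k : ℕ) : 0 ≤ g (x + k) - g (y + k) :=
    sub_nonneg.2 (hg_anti (mem_Ioi.2 (by positivity)) (mem_Ioi.2 (by positivity)) (by gcongr))
  have hlim : Tendsto (fun n : ℕ => f y - f x - (f (y + n) - f (x + n))) atTop (𝓝 (f y - f x)) := by
    simpa only [sub_zero] using
      (tendsto_sub_add_natCast_of_monotoneOn hf hfg hg hx hxy).const_sub (f y - f x)
  refine (hasSum_iff_tendsto_nat_of_nonneg hnonneg _).2 (hlim.congr fun n => ?_)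
  rw [add_natCast_eq_add_sum_of_add_one hfg hx, add_natCast_eq_add_sum_of_add_one hfg hy,
    Finset.sum_sub_distrib]
  ring

end ShiftEquation

/-- The digamma function `ψ` of a real variable, written as the derivative of `log ∘ Γ` rather than
as `logDeriv Gamma` so that its derivative is `trigamma` by definition. -/
noncomputable def digamma : ℝ → ℝ :=
  deriv fun y : ℝ => log (Gamma y)

variable {x y : ℝ}

lemma differentiableAt_log_Gamma (hx : 0 < x) : DifferentiableAt ℝ (fun y => log (Gamma y)) x :=
  ((differentiableOn_Gamma_Ioi x hx).differentiableAt (Ioi_mem_nhds hx)).log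
    (Gamma_pos_of_pos hx).ne'

lemma monotoneOn_digamma : MonotoneOn digamma (Ioi 0) :=
  convexOn_log_Gamma.monotoneOn_deriv fun _ hx => differentiableAt_log_Gamma hx

lemma digamma_add_one (hx : 0 < x) : digamma (x + 1) = digamma x + x⁻¹ := by
  have hshift : HasDerivAt (fun y => log (Gamma (y + 1))) (digamma (x + 1)) x :=
    (differentiableAt_log_Gamma (by positivity)).hasDerivAt.comp_add_const x 1
  have hsum : HasDerivAt (fun y => log (Gamma y) + log y) (digamma x + x⁻¹) x :=
    (differentiableAt_log_Gamma hx).hasDerivAt.add (hasDerivAt_log hx.ne')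
  refine hshift.unique (hsum.congr_of_eventuallyEq ?_)
  filter_upwards [Ioi_mem_nhds hx] with y hy
  rw [Gamma_add_one hy.ne', log_mul hy.ne' (Gamma_pos_of_pos hy).ne', add_comm]

lemma hasSum_digamma_sub (hx : 0 < x) (hxy : x ≤ y) :
    HasSum (fun k : ℕ => (x + k)⁻¹ - (y + k)⁻¹) (digamma y - digamma x) :=
  hasSum_sub_of_monotoneOn_of_antitoneOn monotoneOn_digamma (fun _ => digamma_add_one)
    (fun _ ha _ _ hab => inv_anti₀ ha hab) tendsto_inv_atTop_zero hx hxy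

lemma hasSum_inv_sub_inv_add_one (hx : 0 < x) :
    HasSum (fun k : ℕ => (x + k)⁻¹ - (x + k + 1)⁻¹) x⁻¹ := by
  simpa only [digamma_add_one hx, add_sub_cancel_left, add_right_comm x 1] using
    hasSum_digamma_sub hx (le_add_of_nonneg_right zero_le_one)

lemma summable_inv_add_natCast_sq (x : ℝ) : Summable fun k : ℕ => ((x + k) ^ 2)⁻¹ := by
  simpa [add_comm] using (summable_one_div_nat_add_rpow x 2).2 one_lt_two

lemma hasDerivAt_digamma (hx : 0 < x) : HasDerivAt digamma (∑' k : ℕ, ((x + k) ^ 2)⁻¹) x := by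
  obtain ⟨c, hc, hcx⟩ := exists_between hx
  have hpos {z : ℝ} (hz : z ∈ Ioi c) (k : ℕ) : 0 < z + k :=
    add_pos_of_pos_of_nonneg (hc.trans hz) k.cast_nonneg
  have hterm (k : ℕ) (z : ℝ) (hz : z ∈ Ioi c) :
      HasDerivAt (fun z : ℝ => (c + k)⁻¹ - (z + k)⁻¹) ((z + k) ^ 2)⁻¹ z := by
    simpa [neg_div] using
      (((hasDerivAt_id z).add_const (k : ℝ)).fun_inv (hpos hz k).ne').const_sub (c + k)⁻¹
  have hbound (k : ℕ) (z : ℝ) (hz : z ∈ Ioi c) : ‖((z + k) ^ 2)⁻¹‖ ≤ ((c + k) ^ 2)⁻¹ := by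
    have hcz : c ≤ z := le_of_lt hz
    rw [norm_of_nonneg (by positivity)]
    gcongr
  have hseries : HasDerivAt (fun z : ℝ => ∑' k : ℕ, ((c + k)⁻¹ - (z + k)⁻¹))
      (∑' k : ℕ, ((x + k) ^ 2)⁻¹) x :=
    hasDerivAt_tsum_of_isPreconnected (summable_inv_add_natCast_sq c) isOpen_Ioi isPreconnected_Ioi
      hterm hbound hcx (hasSum_digamma_sub hc hcx.le).summable hcx
  refine (hseries.const_add (digamma c)).congr_of_eventuallyEq ?_
  filter_upwards [Ioi_mem_nhds hcx] with z hz
  rw [(hasSum_digamma_sub hc (le_of_lt hz)).tsum_eq, add_sub_cancel]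

lemma hasSum_trigamma (hx : 0 < x) : HasSum (fun k : ℕ => ((x + k) ^ 2)⁻¹) (trigamma x) := by
  have htsum : trigamma x = ∑' k : ℕ, ((x + k) ^ 2)⁻¹ := (hasDerivAt_digamma hx).deriv
  exact htsum ▸ (summable_inv_add_natCast_sq x).hasSum

lemma trigamma_pos (hx : 0 < x) : 0 < trigamma x :=
  (hasSum_trigamma hx).tsum_eq ▸
    (hasSum_trigamma hx).summable.tsum_pos (fun _ => by positivity) 0 (by positivity)

lemma hasSum_mul_trigamma_sub_one (hx : 0 < x) :
    HasSum (fun k : ℕ => (k + 1) / ((x + k) * (x + k + 1) ^ 2)) (x * trigamma x - 1) := by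
  have htail : HasSum (fun k : ℕ => ((x + k + 1) ^ 2)⁻¹) (trigamma x - (x ^ 2)⁻¹) := by
    simpa [add_assoc] using (hasSum_nat_add_iff' 1).2 (hasSum_trigamma hx)
  have hterm (k : ℕ) : ((k : ℝ) + 1) / ((x + k) * (x + k + 1) ^ 2) =
      (x + k)⁻¹ - (x + k + 1)⁻¹ -
        x * ((x + k)⁻¹ - (x + k + 1)⁻¹ - ((x + k + 1) ^ 2)⁻¹) := by
    field_simp
    ring
  have hvalue : x * trigamma x - 1 = x⁻¹ - x * (x⁻¹ - (trigamma x - (x ^ 2)⁻¹)) := by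
    field_simp
    ring
  simp only [hterm, hvalue]
  have htele := hasSum_inv_sub_inv_add_one hx
  exact htele.sub ((htele.sub htail).mul_left x)

lemma strictAntiOn_mul_trigamma : StrictAntiOn (fun x => x * trigamma x) (Ioi 0) := by
  intro x (hx : 0 < x) y (hy : 0 < y) hxy
  have hterm (k : ℕ) : ((k : ℝ) + 1) / ((y + k) * (y + k + 1) ^ 2) <
      (k + 1) / ((x + k) * (x + k + 1) ^ 2) := by
    gcongr
  exact (sub_lt_sub_iff_right 1).1 <| hasSum_lt (fun k => (hterm k).le) (hterm 0)
    (hasSum_mul_trigamma_sub_one hy) (hasSum_mul_trigamma_sub_one hx)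

/-- For all `a, b > 0`, `ψ₁(a) ψ₁(b) > ψ₁(a+b) (ψ₁(a) + ψ₁(b))`: the determinant
condition making the Hessian in `(a,b)` of the log Beta density negative definite. -/
theorem trigamma_det_condition (a b : ℝ) (ha : 0 < a) (hb : 0 < b) :
    trigamma (a + b) * (trigamma a + trigamma b) < trigamma a * trigamma b :=
  apply_add_mul_add_lt_mul_of_strictAntiOn (fun _ => trigamma_pos) strictAntiOn_mul_trigamma ha hb
end
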